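/- The unconstrained melonic renormalization group flow admits a non-Gaussian fixed point: there exist real numbers ḡ* and m̄²* with 0 < ḡ* < 0.01 and −0.6 < m̄²* < −0.5 such that β_m(ḡ*,m̄²*) = 0 and β_g(ḡ*,m̄²*) = 0 (numerically (ḡ*, m̄²*) ≈ (0.003, −0.55)). -/

import Mathlib

open Real

/-- `Ω(ḡ, m̄²) := (1 + m̄²)² − π²ḡ`. -/
noncomputable def Omega (g m : ℝ) : ℝ := (1 + m) ^ 2 - π ^ 2 * g

/-- The unconstrained melonic anomalous dimension
`η₀(ḡ, m̄²) = 4ḡπ²((1+m̄²)² − (ḡπ²/2)(2+m̄²)) / ((1+m̄²)²Ω + ((2+m̄²)/3)ḡ²π⁴)`. -/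
noncomputable def eta0 (g m : ℝ) : ℝ :=
  4 * g * π ^ 2 * ((1 + m) ^ 2 - (g * π ^ 2 / 2) * (2 + m)) /
    ((1 + m) ^ 2 * Omega g m + ((2 + m) / 3) * g ^ 2 * π ^ 4)

/-- `β_m` for the unconstrained melonic flow. -/
noncomputable def betaM0 (g m : ℝ) : ℝ :=
  -(2 + eta0 g m) * m - 10 * π ^ 2 * g * (1 + eta0 g m / 6) / (1 + m) ^ 2

/-- `β_g` for the unconstrained melonic flow. -/
noncomputable def betaG0 (g m : ℝ) : ℝ :=
  -2 * eta0 g m * g + 4 * g ^ 2 * π ^ 2 * (1 + eta0 g m / 6) / (1 + m) ^ 3 *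
    (1 - (π ^ 2 * g / 2) * (1 / (1 + m) ^ 2 + (1 + 1 / (1 + m))))

noncomputable def Taux (y : ℝ) : ℝ :=
  4 * (1 - y) / ((8 + 2 * y) + √((8 + 2 * y) ^ 2 - 8 * (1 - y) * (6 + 4 * y ^ 2) / 3))

lemma Taux_pos {y : ℝ} (h1 : 0.4 ≤ y) (h2 : y ≤ 0.5) : 0 < Taux y := by
  norm_num at h1 h2
  unfold Taux
  have := Real.sqrt_nonneg ((8 + 2 * y) ^ 2 - 8 * (1 - y) * (6 + 4 * y ^ 2) / 3)
  apply div_pos <;> linarith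

lemma Taux_le {y : ℝ} (h1 : 0.4 ≤ y) (h2 : y ≤ 0.5) : Taux y ≤ 3 / 11 := by
  norm_num at h1 h2
  unfold Taux
  have := Real.sqrt_nonneg ((8 + 2 * y) ^ 2 - 8 * (1 - y) * (6 + 4 * y ^ 2) / 3)
  rw [div_le_iff₀ (by linarith)]
  linarith

lemma Taux_eq {y : ℝ} (h1 : 0.4 ≤ y) (h2 : y ≤ 0.5) :
    Taux y ^ 2 * (6 + 4 * y ^ 2) / 3 - (8 + 2 * y) * Taux y + 2 * (1 - y) = 0 := by
  norm_num at h1 h2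
  unfold Taux
  have h0 : 0 ≤ (8 + 2 * y) ^ 2 - 8 * (1 - y) * (6 + 4 * y ^ 2) / 3 := by
    nlinarith [mul_nonneg (by linarith : (0:ℝ) ≤ y) (sq_nonneg y), sq_nonneg y]
  have hs := Real.sqrt_nonneg ((8 + 2 * y) ^ 2 - 8 * (1 - y) * (6 + 4 * y ^ 2) / 3)
  have hq := Real.sq_sqrt h0
  generalize √((8 + 2 * y) ^ 2 - 8 * (1 - y) * (6 + 4 * y ^ 2) / 3) = r at *
  have : 8 + 2 * y + r ≠ 0 := by linarith
  field_simp
  linear_combination (6 * (1 - y)) * hq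

lemma Taux_cont : ContinuousOn Taux (Set.Icc 0.4 0.5) := by
  unfold Taux
  apply ContinuousOn.div (by fun_prop)
  · apply ContinuousOn.add (by fun_prop)
    exact ContinuousOn.sqrt (by fun_prop)
  · intro y hy
    have h1 := hy.1
    norm_num at h1
    have := Real.sqrt_nonneg ((8 + 2 * y) ^ 2 - 8 * (1 - y) * (6 + 4 * y ^ 2) / 3)
    linarith

noncomputable def Faux (y : ℝ) : ℝ :=
  2 * y - Taux y * y * (1 + y) - (1 - Taux y / 3) * (1 - Taux y / 2 * (1 + y + y ^ 2))

lemma Faux_root : ∃ y : ℝ, 0.4 < y ∧ y < 0.5 ∧ Faux y = 0 := by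
  have hc : ContinuousOn Faux (Set.Icc 0.4 0.5) := by
    unfold Faux
    have := Taux_cont
    fun_prop
  have ha : Faux 0.4 < 0 := by
    have h1 := Taux_pos (y := 0.4) (by norm_num) (by norm_num)
    have h2 := Taux_le (y := 0.4) (by norm_num) (by norm_num)
    unfold Faux
    nlinarith
  have hb : 0 < Faux 0.5 := by
    have h1 := Taux_pos (y := 0.5) (by norm_num) (by norm_num)
    have h2 := Taux_le (y := 0.5) (by norm_num) (by norm_num)
    unfold Faux
    nlinarith
  obtain ⟨y, hy, h⟩ := intermediate_value_Ioo (by norm_num) hc ⟨ha, hb⟩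
  exact ⟨y, hy.1, hy.2, h⟩

lemma eta_form (t y g : ℝ) (hg : g * π ^ 2 = t * y ^ 2) (hy : y ≠ 0)
    (hD : 1 - t + (1 + y) * t ^ 2 / 3 ≠ 0) :
    eta0 g (y - 1) = 4 * t * (1 - t * (1 + y) / 2) / (1 - t + (1 + y) * t ^ 2 / 3) := by
  have e : eta0 g (y - 1) = 4 * (g * π ^ 2) * (y ^ 2 - (g * π ^ 2) / 2 * (1 + y)) /
      (y ^ 2 * (y ^ 2 - g * π ^ 2) + (1 + y) / 3 * (g * π ^ 2) ^ 2) := by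
    unfold eta0 Omega
    congr 1 <;> ring
  rw [e, hg]
  have : y ^ 2 * (y ^ 2 - t * y ^ 2) + (1 + y) / 3 * (t * y ^ 2) ^ 2
    = y ^ 4 * (1 - t + (1 + y) * t ^ 2 / 3) := by ring
  rw [this, div_eq_div_iff (by positivity) hD]
  ring

theorem unconstrained_nonGaussian_fixed_point :
    ∃ g m : ℝ, 0 < g ∧ g < 0.01 ∧ -0.6 < m ∧ m < -0.5 ∧
      betaM0 g m = 0 ∧ betaG0 g m = 0 := by
  obtain ⟨y, h1, h2, hF⟩ := Faux_root
  have tp := Taux_pos h1.le h2.le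
  have tl := Taux_le h1.le h2.le
  have te := Taux_eq h1.le h2.le
  unfold Faux at hF
  generalize Taux y = t at *
  norm_num at h1 h2
  have hy : 0 < y := by linarith
  have hpi : 0 < π ^ 2 := by positivity
  have hpi9 : 9 < π ^ 2 := by nlinarith [Real.pi_gt_three]
  have hg : (t * y ^ 2 / π ^ 2) * π ^ 2 = t * y ^ 2 := by field_simp
  have hgp : 0 < t * y ^ 2 / π ^ 2 := by positivity
  have hgl : t * y ^ 2 / π ^ 2 < 0.01 := by
    rw [div_lt_iff₀ hpi]
    have : y ^ 2 ≤ 1 / 4 := by nlinarith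
    have : t * y ^ 2 ≤ 3 / 11 * (1 / 4) := by gcongr
    linarith
  generalize t * y ^ 2 / π ^ 2 = g at *
  have hDp : 0 < 1 - t + (1 + y) * t ^ 2 / 3 := by
    have : 0 < (1 + y) * t ^ 2 / 3 := by positivity
    linarith
  have he := eta_form t y g hg hy.ne' hDp.ne'
  refine ⟨g, y - 1, hgp, hgl, by norm_num; linarith, by norm_num; linarith, ?_, ?_⟩
  · have e : betaM0 g (y - 1) = -(2 + eta0 g (y - 1)) * (y - 1)
        - 10 * (g * π ^ 2) * (1 + eta0 g (y - 1) / 6) / y ^ 2 := by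
      unfold betaM0
      rw [show 1 + (y - 1) = y by ring]; ring
    rw [e, hg, he]
    have hD := hDp.ne'
    generalize hd : 1 - t + (1 + y) * t ^ 2 / 3 = D at *
    field_simp
    subst hd
    linear_combination 12 * te
  · have e : betaG0 g (y - 1) = g * (-2 * eta0 g (y - 1) + 4 * (g * π ^ 2) *
        (1 + eta0 g (y - 1) / 6) / y ^ 3 *
        (1 - (g * π ^ 2) / 2 * (1 / y ^ 2 + (1 + 1 / y)))) := by
      unfold betaG0
      rw [show 1 + (y - 1) = y by ring]; ring
    rw [e, hg, he]
    have hD := hDp.ne'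
    generalize hd : 1 - t + (1 + y) * t ^ 2 / 3 = D at *
    apply mul_eq_zero_of_right
    field_simp
    subst hd
    linear_combination (-96 * t) * hF
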